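/- arXiv:2404.01351 — 2 statements merged into one kernel-verified Lean document; each statement's English description precedes it below -/
import Mathlib

section
/- (PDD decomposition step in the proof of Theorem 2.) Suppose robust confidence–prediction calibration holds with over-confident class k' and constants b ≥ 1, 0 ≤ a ≤ 1. Then the expected pairwise disagreement satisfies ∫_{Θ×Θ} ( ∫_Ω 1{h(θ, X(ω)) ≠ h(θ', X(ω))} dν(ω) ) d(μ ⊗ μ)(θ, θ') = ((b − a)/b) · T_{k'} + (1/b) · ∫_Θ Err(θ) dμ(θ), where T_{k'} = ∫_Ω h̃_{k'}(X(ω)) (1 − h̃_{k'}(X(ω))) dν(ω). -/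
open MeasureTheory


theorem calib_aux {Ω : Type*} [MeasurableSpace Ω] (ν : Measure Ω) [IsProbabilityMeasure ν]
    (f g : Ω → ℝ) (hf : Measurable f) (hg : Measurable g)
    (hfb : ∀ ω, ‖f ω‖ ≤ 1) (hgb : ∀ ω, ‖g ω‖ ≤ 1) (c : ℝ)
    (hc : ν[f | MeasurableSpace.comap g Real.measurableSpace] =ᵐ[ν] fun ω => c * g ω) :
    (∫ ω, f ω ∂ν = c * ∫ ω, g ω ∂ν) ∧ (∫ ω, g ω * f ω ∂ν = c * ∫ ω, g ω * g ω ∂ν) := by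
  have hm : MeasurableSpace.comap g Real.measurableSpace ≤ _ := hg.comap_le
  have hfi : Integrable f ν :=
    Integrable.of_bound hf.aestronglyMeasurable 1 (Filter.Eventually.of_forall hfb)
  have hgf : Integrable (g * f) ν := by
    refine Integrable.of_bound (hg.mul hf).aestronglyMeasurable 1 (Filter.Eventually.of_forall ?_)
    intro ω
    simp only [Pi.mul_apply, norm_mul]
    exact mul_le_one₀ (hgb ω) (norm_nonneg _) (hfb ω)
  have hgs : StronglyMeasurable[MeasurableSpace.comap g Real.measurableSpace] g :=
    (comap_measurable g).stronglyMeasurable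
  constructor
  · rw [← integral_condExp hm, integral_congr_ae hc, integral_const_mul]
  · have h1 := condExp_mul_of_stronglyMeasurable_left hgs hgf hfi
    have h2 : ∫ ω, g ω * f ω ∂ν = ∫ ω, (g * f) ω ∂ν := rfl
    rw [h2, ← integral_condExp hm, integral_congr_ae h1, ← integral_const_mul]
    apply integral_congr_ae
    filter_upwards [hc] with ω hω
    simp only [Pi.mul_apply, hω]
    ring

theorem ind_sum {K : ℕ} (i j : Fin K) :
    (if i = j then (0:ℝ) else 1) =
      1 - ∑ k, (if i = k then (1:ℝ) else 0) * (if j = k then (1:ℝ) else 0) := by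
  by_cases hij : i = j
  · subst hij; simp
  · simp [hij]

theorem ind_meas {K : ℕ} {α : Type*} [MeasurableSpace α] {f : α → Fin K} (hf : Measurable f)
    (k : Fin K) : Measurable (fun x => if f x = k then (1:ℝ) else 0) :=
  (measurable_of_countable (fun i : Fin K => if i = k then (1:ℝ) else 0)).comp hf

theorem ind_norm {K : ℕ} (i k : Fin K) : ‖(if i = k then (1:ℝ) else 0)‖ ≤ 1 := by
  split_ifs <;> simp

theorem bdd_int {α : Type*} [MeasurableSpace α] {m : Measure α} [IsFiniteMeasure m]
    {f : α → ℝ} (hf : Measurable f) (hb : ∀ x, ‖f x‖ ≤ 1) : Integrable f m :=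
  Integrable.of_bound hf.aestronglyMeasurable 1 (Filter.Eventually.of_forall hb)

theorem mul_bdd {x y : ℝ} (hx : ‖x‖ ≤ 1) (hy : ‖y‖ ≤ 1) : ‖x * y‖ ≤ 1 := by
  rw [norm_mul]; exact mul_le_one₀ hx (norm_nonneg _) hy

theorem diff_meas {K : ℕ} {α : Type*} [MeasurableSpace α] {f g : α → Fin K} (hf : Measurable f)
    (hg : Measurable g) : Measurable (fun x => if f x = g x then (0:ℝ) else 1) :=
  (measurable_of_countable (fun i : Fin K × Fin K => if i.1 = i.2 then (0:ℝ) else 1)).comp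
    (hf.prodMk hg)

theorem diff_norm {K : ℕ} (i k : Fin K) : ‖(if i = k then (0:ℝ) else 1)‖ ≤ 1 := by
  split_ifs <;> simp

/-- PDD decomposition step in the proof of Theorem 2. -/
theorem pdd_decomposition_robust
    {Θ Ω 𝒳 : Type*} [MeasurableSpace Θ] [MeasurableSpace Ω] [MeasurableSpace 𝒳]
    (μ : Measure Θ) (ν : Measure Ω)
    [IsProbabilityMeasure μ] [IsProbabilityMeasure ν]
    (K : ℕ) (hK : 1 ≤ K)
    (h : Θ × 𝒳 → Fin K) (hmeas : Measurable h)
    (X : Ω → 𝒳) (hX : Measurable X)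
    (Y : Ω → Fin K) (hY : Measurable Y)
    (htilde : Fin K → 𝒳 → ℝ)
    (htilde_def : ∀ k x, htilde k x = (μ {θ | h (θ, x) = k}).toReal)
    (Err : Θ → ℝ)
    (Err_def : ∀ θ, Err θ = (ν {ω | h (θ, X ω) ≠ Y ω}).toReal)
    (k' : Fin K) (a b : ℝ) (hb : 1 ≤ b) (ha0 : 0 ≤ a) (ha1 : a ≤ 1)
    (calib_over :
      ν[(fun ω => if Y ω = k' then (1 : ℝ) else 0) |
          MeasurableSpace.comap (fun ω => htilde k' (X ω)) Real.measurableSpace]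
        =ᵐ[ν] fun ω => a * htilde k' (X ω))
    (calib_rest : ∀ k : Fin K, k ≠ k' →
      ν[(fun ω => if Y ω = k then (1 : ℝ) else 0) |
          MeasurableSpace.comap (fun ω => htilde k (X ω)) Real.measurableSpace]
        =ᵐ[ν] fun ω => b * htilde k (X ω)) :
    ∫ p : Θ × Θ,
        (∫ ω, (if h (p.1, X ω) = h (p.2, X ω) then (0 : ℝ) else 1) ∂ν) ∂(μ.prod μ) =
      ((b - a) / b) * (∫ ω, htilde k' (X ω) * (1 - htilde k' (X ω)) ∂ν) +
        (1 / b) * ∫ θ, Err θ ∂μ := by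
  have hsec : ∀ x, Measurable (fun θ => h (θ, x)) := fun x => hmeas.comp (by fun_prop)
  have ht : ∀ k x, htilde k x = ∫ θ, (if h (θ, x) = k then (1:ℝ) else 0) ∂μ := by
    intro k x
    have hs : MeasurableSet {θ | h (θ, x) = k} := hsec x (measurableSet_singleton k)
    rw [htilde_def]
    have := integral_indicator_one (μ := μ) hs
    rw [Measure.real] at this
    rw [← this]
    apply integral_congr_ae
    refine Filter.Eventually.of_forall fun θ => ?_
    simp [Set.indicator_apply]
  have htm : ∀ k, Measurable (htilde k) := by
    intro k
    have e : htilde k = fun x => ∫ θ, (if h (θ, x) = k then (1:ℝ) else 0) ∂μ := funext (ht k)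
    rw [e]
    have := (ind_meas hmeas k).stronglyMeasurable.integral_prod_left' (μ := μ)
    exact this.measurable
  have htn : ∀ k x, ‖htilde k x‖ ≤ 1 := by
    intro k x
    rw [htilde_def, Real.norm_of_nonneg ENNReal.toReal_nonneg]
    exact measureReal_le_one
  have hti : ∀ k, Integrable (fun ω => htilde k (X ω)) ν := fun k =>
    bdd_int ((htm k).comp hX) (fun _ => htn _ _)
  have htt : ∀ k, Integrable (fun ω => htilde k (X ω) * htilde k (X ω)) ν := fun k =>
    bdd_int (((htm k).comp hX).mul ((htm k).comp hX)) (fun _ => mul_bdd (htn _ _) (htn _ _))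
  have hty : ∀ k, Integrable (fun ω => htilde k (X ω) * (if Y ω = k then (1:ℝ) else 0)) ν :=
    fun k => bdd_int (((htm k).comp hX).mul (ind_meas hY k))
      (fun _ => mul_bdd (htn _ _) (ind_norm _ _))
  have hiθ : ∀ k x, Integrable (fun θ => if h (θ, x) = k then (1:ℝ) else 0) μ := fun k x =>
    bdd_int (ind_meas (hsec x) k) (fun _ => ind_norm _ _)
  have hsum : ∀ x, ∑ k, htilde k x = 1 := by
    intro x
    simp_rw [ht]
    rw [← integral_finsetSum _ (fun k _ => hiθ k x)]
    simp
  -- the pairwise disagreement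
  have hL : ∫ p : Θ × Θ,
        (∫ ω, (if h (p.1, X ω) = h (p.2, X ω) then (0 : ℝ) else 1) ∂ν) ∂(μ.prod μ)
      = 1 - ∑ k, ∫ ω, htilde k (X ω) * htilde k (X ω) ∂ν := by
    rw [integral_integral_swap]
    · have : ∀ ω, ∫ p : Θ × Θ, (if h (p.1, X ω) = h (p.2, X ω) then (0 : ℝ) else 1) ∂(μ.prod μ)
          = 1 - ∑ k, htilde k (X ω) * htilde k (X ω) := by
        intro ω
        simp_rw [ind_sum]
        have hi : ∀ k, Integrable (fun p : Θ × Θ => (if h (p.1, X ω) = k then (1:ℝ) else 0) *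
            (if h (p.2, X ω) = k then (1:ℝ) else 0)) (μ.prod μ) := fun k =>
          (hiθ k (X ω)).mul_prod (hiθ k (X ω))
        rw [integral_sub (integrable_const _) (integrable_finsetSum _ fun k _ => hi k),
          integral_finsetSum _ fun k _ => hi k]
        congr 1
        · simp
        · refine Finset.sum_congr rfl fun k _ => ?_
          rw [ht]
          exact integral_prod_mul (fun θ => if h (θ, X ω) = k then (1:ℝ) else 0)
            (fun θ => if h (θ, X ω) = k then (1:ℝ) else 0)
      simp_rw [this]
      rw [integral_sub (integrable_const _) (integrable_finsetSum _ fun k _ => htt k),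
          integral_finsetSum _ fun k _ => htt k]
      simp
    · exact bdd_int (diff_meas (f := fun q : (Θ × Θ) × Ω => h (q.1.1, X q.2))
        (g := fun q : (Θ × Θ) × Ω => h (q.1.2, X q.2))
        (hmeas.comp (by fun_prop)) (hmeas.comp (by fun_prop))) (fun _ => diff_norm _ _)
  have hE : ∫ θ, Err θ ∂μ
      = 1 - ∑ k, ∫ ω, htilde k (X ω) * (if Y ω = k then (1:ℝ) else 0) ∂ν := by
    have e : ∀ θ, Err θ = ∫ ω, (if h (θ, X ω) = Y ω then (0 : ℝ) else 1) ∂ν := by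
      intro θ
      have hs : MeasurableSet {ω | h (θ, X ω) ≠ Y ω} :=
        (measurableSet_eq_fun (hmeas.comp (by fun_prop)) hY).compl
      rw [Err_def]
      have := integral_indicator_one (μ := ν) hs
      rw [Measure.real] at this
      rw [← this]
      apply integral_congr_ae
      refine Filter.Eventually.of_forall fun ω => ?_
      simp [Set.indicator_apply]
    simp_rw [e]
    rw [integral_integral_swap]
    · have : ∀ ω, ∫ θ, (if h (θ, X ω) = Y ω then (0 : ℝ) else 1) ∂μ
          = 1 - ∑ k, htilde k (X ω) * (if Y ω = k then (1:ℝ) else 0) := by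
        intro ω
        simp_rw [ind_sum]
        have hi : ∀ k, Integrable (fun θ => (if h (θ, X ω) = k then (1:ℝ) else 0) *
            (if Y ω = k then (1:ℝ) else 0)) μ := fun k => (hiθ k (X ω)).mul_const _
        rw [integral_sub (integrable_const _) (integrable_finsetSum _ fun k _ => hi k),
          integral_finsetSum _ fun k _ => hi k]
        congr 1
        · simp
        · refine Finset.sum_congr rfl fun k _ => ?_
          rw [ht, integral_mul_const]
      simp_rw [this]
      rw [integral_sub (integrable_const _) (integrable_finsetSum _ fun k _ => hty k),
          integral_finsetSum _ fun k _ => hty k]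
      simp
    · exact bdd_int (diff_meas (f := fun q : Θ × Ω => h (q.1, X q.2))
        (g := fun q : Θ × Ω => Y q.2)
        (hmeas.comp (by fun_prop)) (by fun_prop)) (fun _ => diff_norm _ _)
  have hM : ∑ k, ∫ ω, htilde k (X ω) ∂ν = 1 := by
    rw [← integral_finsetSum _ fun k _ => hti k]
    simp [hsum]
  have hYs : ∑ k, ∫ ω, (if Y ω = k then (1:ℝ) else 0) ∂ν = 1 := by
    rw [← integral_finsetSum _ fun k _ => bdd_int (ind_meas hY k) (fun _ => ind_norm _ _)]
    simp
  have hT : ∫ ω, htilde k' (X ω) * (1 - htilde k' (X ω)) ∂ν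
      = ∫ ω, htilde k' (X ω) ∂ν - ∫ ω, htilde k' (X ω) * htilde k' (X ω) ∂ν := by
    rw [← integral_sub (hti k') (htt k')]
    congr 1; ext ω; ring
  have c0 := calib_aux ν _ _ (ind_meas hY k') ((htm k').comp hX) (fun _ => ind_norm _ _)
    (fun _ => htn _ _) a calib_over
  have c1 := fun k (hk : k ≠ k') => calib_aux ν _ _ (ind_meas hY k) ((htm k).comp hX)
    (fun _ => ind_norm _ _) (fun _ => htn _ _) b (calib_rest k hk)
  simp only [Function.comp_apply] at c0 c1
  rw [hL, hE, hT]
  rw [← Finset.add_sum_erase _ _ (Finset.mem_univ k')] at hM hYs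
  rw [← Finset.add_sum_erase _ _ (Finset.mem_univ k'),
    ← Finset.add_sum_erase _ (fun k => ∫ ω, htilde k (X ω) * (if Y ω = k then (1:ℝ) else 0) ∂ν)
      (Finset.mem_univ k')]
  rw [Finset.sum_congr rfl (fun k hk => (c1 k (Finset.ne_of_mem_erase hk)).1),
    ← Finset.mul_sum, c0.1] at hYs
  rw [Finset.sum_congr rfl (fun k hk => (c1 k (Finset.ne_of_mem_erase hk)).2),
    ← Finset.mul_sum, c0.2]
  have hb0 : b ≠ 0 := by linarith
  field_simp
  linear_combination hYs - b * hM
end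

section
/- (Justification for omitting C in Equation (9): scaled PDD upper-bounds the error.) Suppose robust confidence–prediction calibration holds with over-confident class k' and constants b ≥ 1, 0 ≤ a ≤ 1. Since 0 ≤ h̃_{k'}(x) ≤ 1 for all x, the constant C = (b − a) ∫_Ω h̃_{k'}(X(ω)) (1 − h̃_{k'}(X(ω))) dν(ω) is nonnegative, and consequently ∫_Θ Err(θ) dμ(θ) ≤ b · ∫_{Θ^{N+1}} PDD_N d(μ^{⊗(N+1)}) for every N ≥ 1. -/
open MeasureTheory

lemma aux_int {α : Type*} [MeasurableSpace α] (m : Measure α) [IsFiniteMeasure m]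
    (f : α → ℝ) (hf : Measurable f) (h0 : ∀ x, 0 ≤ f x) (h1 : ∀ x, f x ≤ 1) :
    Integrable f m :=
  Integrable.of_bound hf.aestronglyMeasurable 1
    (Filter.Eventually.of_forall fun x => by
      rw [Real.norm_eq_abs, abs_le]; constructor <;> linarith [h0 x, h1 x])

lemma aux_calib {Ω : Type*} [mΩ : MeasurableSpace Ω] (ν : Measure Ω) [IsProbabilityMeasure ν]
    (f g : Ω → ℝ) (hf : Measurable f) (hg : Measurable g)
    (f0 : ∀ x, 0 ≤ f x) (f1 : ∀ x, f x ≤ 1) (g0 : ∀ x, 0 ≤ g x) (g1 : ∀ x, g x ≤ 1)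
    (c : ℝ) (hc : ν[f | MeasurableSpace.comap g Real.measurableSpace] =ᵐ[ν] fun ω => c * g ω) :
    ∫ ω, f ω * (1 - g ω) ∂ν = c * ∫ ω, g ω * (1 - g ω) ∂ν := by
  have hm : MeasurableSpace.comap g Real.measurableSpace ≤ mΩ := hg.comap_le
  have hgm : StronglyMeasurable[MeasurableSpace.comap g Real.measurableSpace]
      (fun ω => 1 - g ω) :=
    (measurable_const.sub (comap_measurable g)).stronglyMeasurable
  have hfi := aux_int ν f hf f0 f1
  have hfg : Integrable (f * fun ω => 1 - g ω) ν :=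
    aux_int ν _ (hf.mul (measurable_const.sub hg))
      (fun x => mul_nonneg (f0 x) (by linarith [g1 x]))
      (fun x => mul_le_one₀ (f1 x) (by linarith [g1 x]) (by linarith [g0 x]))
  have h1 := condExp_mul_of_stronglyMeasurable_right hgm hfg hfi
  calc ∫ ω, f ω * (1 - g ω) ∂ν
      = ∫ ω, (ν[f * (fun ω => 1 - g ω) | MeasurableSpace.comap g Real.measurableSpace]) ω ∂ν :=
        (integral_condExp hm).symm
    _ = ∫ ω, c * (g ω * (1 - g ω)) ∂ν := by
        apply integral_congr_ae
        filter_upwards [h1, hc] with ω h1 h2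
        rw [h1, Pi.mul_apply, h2]; ring
    _ = _ := integral_const_mul _ _

lemma aux_pair {Θ : Type*} [MeasurableSpace Θ] (μ : Measure Θ) [IsProbabilityMeasure μ]
    (n : ℕ) (i j : Fin n) (hij : i ≠ j) (f : Θ → ℝ) (hf : Measurable f) :
    ∫ θs, f (θs i) * f (θs j) ∂(Measure.pi fun _ : Fin n => μ) =
      (∫ θ, f θ ∂μ) * ∫ θ, f θ ∂μ := by
  have hI := ProbabilityTheory.iIndepFun_pi (μ := fun _ : Fin n => μ) (X := fun _ => f)
    (fun _ => hf.aemeasurable)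
  have h2 := (hI.indepFun hij).integral_fun_mul_eq_mul_integral
    (hf.comp (measurable_pi_apply i)).aestronglyMeasurable
    (hf.comp (measurable_pi_apply j)).aestronglyMeasurable
  rw [h2, integral_comp_eval (μ := fun _ : Fin n => μ) hf.aestronglyMeasurable,
    integral_comp_eval (μ := fun _ : Fin n => μ) hf.aestronglyMeasurable]

/-- Omitting `C`: the constant `C` is nonnegative, hence scaled PDD upper-bounds the error. -/
theorem scaled_pdd_upper_bounds_error
    {Θ Ω 𝒳 : Type*} [MeasurableSpace Θ] [MeasurableSpace Ω] [MeasurableSpace 𝒳]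
    (μ : Measure Θ) (ν : Measure Ω)
    [IsProbabilityMeasure μ] [IsProbabilityMeasure ν]
    (K : ℕ) (hK : 1 ≤ K)
    (h : Θ × 𝒳 → Fin K) (hmeas : Measurable h)
    (X : Ω → 𝒳) (hX : Measurable X)
    (Y : Ω → Fin K) (hY : Measurable Y)
    (htilde : Fin K → 𝒳 → ℝ)
    (htilde_def : ∀ k x, htilde k x = (μ {θ | h (θ, x) = k}).toReal)
    (Err : Θ → ℝ)
    (Err_def : ∀ θ, Err θ = (ν {ω | h (θ, X ω) ≠ Y ω}).toReal)
    (k' : Fin K) (a b : ℝ) (hb : 1 ≤ b) (ha0 : 0 ≤ a) (ha1 : a ≤ 1)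
    (calib_over :
      ν[(fun ω => if Y ω = k' then (1 : ℝ) else 0) |
          MeasurableSpace.comap (fun ω => htilde k' (X ω)) Real.measurableSpace]
        =ᵐ[ν] fun ω => a * htilde k' (X ω))
    (calib_rest : ∀ k : Fin K, k ≠ k' →
      ν[(fun ω => if Y ω = k then (1 : ℝ) else 0) |
          MeasurableSpace.comap (fun ω => htilde k (X ω)) Real.measurableSpace]
        =ᵐ[ν] fun ω => b * htilde k (X ω))
    (PDD : (N : ℕ) → (Fin (N + 1) → Θ) → ℝ)
    (PDD_def : ∀ (N : ℕ) (θs : Fin (N + 1) → Θ),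
      PDD N θs = ∫ ω, (1 / (N : ℝ)) *
        ∑ i : Fin N, (if h (θs 0, X ω) = h (θs i.succ, X ω) then (0 : ℝ) else 1) ∂ν) :
    0 ≤ (b - a) * (∫ ω, htilde k' (X ω) * (1 - htilde k' (X ω)) ∂ν) ∧
      ∀ N : ℕ, 1 ≤ N →
        ∫ θ, Err θ ∂μ ≤
          b * ∫ θs, PDD N θs ∂(Measure.pi fun _ : Fin (N + 1) => μ) := by
  classical
  set e : Fin K → Θ → Ω → ℝ := fun k θ ω => if h (θ, X ω) = k then 1 else 0 with he
  set y : Fin K → Ω → ℝ := fun k ω => if Y ω = k then 1 else 0 with hy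
  set g : Fin K → Ω → ℝ := fun k ω => htilde k (X ω) with hg
  have hms : ∀ k : Fin K, MeasurableSet {p : Θ × 𝒳 | h p = k} := fun k =>
    hmeas (measurableSet_singleton k)
  have em : ∀ k, Measurable (Function.uncurry (e k)) := fun k =>
    Measurable.ite ((measurable_fst.prodMk (hX.comp measurable_snd)) (hms k))
      measurable_const measurable_const
  have em1 : ∀ k ω, Measurable (fun θ => e k θ ω) := fun k ω =>
    (em k).comp (measurable_id.prodMk measurable_const)
  have e0 : ∀ k θ ω, 0 ≤ e k θ ω := fun k θ ω => by simp only [he]; split_ifs <;> norm_num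
  have e1 : ∀ k θ ω, e k θ ω ≤ 1 := fun k θ ω => by simp only [he]; split_ifs <;> norm_num
  have y0 : ∀ k ω, 0 ≤ y k ω := fun k ω => by simp only [hy]; split_ifs <;> norm_num
  have y1 : ∀ k ω, y k ω ≤ 1 := fun k ω => by simp only [hy]; split_ifs <;> norm_num
  have ym : ∀ k, Measurable (y k) := fun k =>
    Measurable.ite (hY (measurableSet_singleton k)) measurable_const measurable_const
  have ge : ∀ k ω, ∫ θ, e k θ ω ∂μ = g k ω := by
    intro k ω
    have hs : MeasurableSet {θ | h (θ, X ω) = k} :=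
      (measurable_id.prodMk measurable_const) (hms k)
    have : (fun θ => e k θ ω) = Set.indicator {θ | h (θ, X ω) = k} 1 := by
      funext θ; simp [he, Set.indicator_apply]
    rw [this, integral_indicator_one hs]
    simp only [hg, htilde_def]; rfl
  have gm : ∀ k, Measurable (g k) := by
    intro k
    have : g k = fun ω => (μ {θ | h (θ, X ω) = k}).toReal := by
      funext ω; simp only [hg, htilde_def]
    rw [this]
    exact (measurable_measure_prodMk_right
      ((measurable_fst.prodMk (hX.comp measurable_snd)) (hms k))).ennreal_toReal
  have g0 : ∀ k ω, 0 ≤ g k ω := fun k ω => by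
    simp only [hg, htilde_def]; exact ENNReal.toReal_nonneg
  have g1 : ∀ k ω, g k ω ≤ 1 := fun k ω => by
    simp only [hg, htilde_def]; exact measureReal_le_one
  have ei : ∀ k ω, Integrable (fun θ => e k θ ω) μ := fun k ω =>
    aux_int μ _ (em1 k ω) (fun θ => e0 k θ ω) (fun θ => e1 k θ ω)
  have gsum : ∀ ω, ∑ k, g k ω = 1 := by
    intro ω
    simp_rw [← ge]
    rw [← integral_finsetSum _ (fun k _ => ei k ω)]
    simp [he]
  have gg0 : ∀ k, 0 ≤ ∫ ω, g k ω * (1 - g k ω) ∂ν := fun k =>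
    integral_nonneg fun ω => mul_nonneg (g0 k ω) (by linarith [g1 k ω])
  have ggi : ∀ k, Integrable (fun ω => g k ω * (1 - g k ω)) ν := fun k =>
    aux_int ν _ ((gm k).mul (measurable_const.sub (gm k)))
      (fun x => mul_nonneg (g0 k x) (by linarith [g1 k x]))
      (fun x => mul_le_one₀ (g1 k x) (by linarith [g1 k x]) (by linarith [g0 k x]))
  have ygi : ∀ k, Integrable (fun ω => y k ω * (1 - g k ω)) ν := fun k =>
    aux_int ν _ ((ym k).mul (measurable_const.sub (gm k)))
      (fun x => mul_nonneg (y0 k x) (by linarith [g1 k x]))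
      (fun x => mul_le_one₀ (y1 k x) (by linarith [g1 k x]) (by linarith [g0 k x]))
  refine ⟨mul_nonneg (by linarith) (gg0 k'), ?_⟩
  -- the error
  have herr : ∫ θ, Err θ ∂μ = ∑ k, ∫ ω, y k ω * (1 - g k ω) ∂ν := by
    have h1 : ∀ θ, Err θ = ∫ ω, ∑ k, y k ω * (1 - e k θ ω) ∂ν := by
      intro θ
      have hs : MeasurableSet {ω | h (θ, X ω) ≠ Y ω} :=
        (measurableSet_eq_fun (hmeas.comp (measurable_const.prodMk hX)) hY).compl
      have : (fun ω => ∑ k, y k ω * (1 - e k θ ω))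
          = Set.indicator {ω | h (θ, X ω) ≠ Y ω} 1 := by
        funext ω
        by_cases hc : h (θ, X ω) = Y ω <;> simp [he, hy, Set.indicator_apply, hc]
      rw [this, integral_indicator_one hs, Err_def]; rfl
    simp_rw [h1]
    rw [integral_integral_swap]
    · rw [← integral_finsetSum _ (fun k _ => ygi k)]
      congr 1; funext ω
      rw [integral_finsetSum]
      · refine Finset.sum_congr rfl fun k _ => ?_
        rw [integral_const_mul, integral_sub (integrable_const _) (ei k ω), ge]
        simp
      · intro k _
        exact ((integrable_const _).sub (ei k ω)).const_mul _
    · refine integrable_finsetSum (μ := μ.prod ν) (f := fun k p => y k p.2 * (1 - e k p.1 p.2)) _ fun k _ => ?_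
      refine aux_int _ _ (((ym k).comp measurable_snd).mul (measurable_const.sub (em k))) ?_ ?_
      · exact fun p => mul_nonneg (y0 k p.2) (by linarith [e1 k p.1 p.2])
      · exact fun p => mul_le_one₀ (y1 k p.2) (by linarith [e1 k p.1 p.2])
          (by linarith [e0 k p.1 p.2])
  intro N hN
  have hN0 : (N : ℝ) ≠ 0 := by positivity
  have hpdd : ∫ θs, PDD N θs ∂(Measure.pi fun _ : Fin (N + 1) => μ)
      = ∑ k, ∫ ω, g k ω * (1 - g k ω) ∂ν := by
    set P := Measure.pi fun _ : Fin (N + 1) => μ with hP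
    have h1 : ∀ θs, PDD N θs = ∫ ω, (1 / (N : ℝ)) *
        ∑ i : Fin N, (1 - ∑ k, e k (θs 0) ω * e k (θs i.succ) ω) ∂ν := by
      intro θs
      rw [PDD_def]
      congr 1; funext ω; congr 1
      refine Finset.sum_congr rfl fun i _ => ?_
      by_cases hc : h (θs 0, X ω) = h (θs i.succ, X ω)
      · simp [he, hc]
      · have hc' : ¬ h (θs i.succ, X ω) = h (θs 0, X ω) := fun q => hc q.symm
        simp [he, hc, hc']
    have em2 : ∀ k j, Measurable (fun p : (Fin (N+1) → Θ) × Ω => e k (p.1 j) p.2) := fun k j =>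
      Measurable.comp (g := Function.uncurry (e k))
        (f := fun p : (Fin (N+1) → Θ) × Ω => (p.1 j, p.2)) (em k)
        (((measurable_pi_apply j).comp measurable_fst).prodMk measurable_snd)
    have ei2 : ∀ ω k (i : Fin N), Integrable (fun θs : Fin (N+1) → Θ =>
        e k (θs 0) ω * e k (θs i.succ) ω) P := fun ω k i =>
      aux_int _ _ (((em1 k ω).comp (measurable_pi_apply _)).mul
        ((em1 k ω).comp (measurable_pi_apply _)))
        (fun _ => mul_nonneg (e0 ..) (e0 ..)) (fun _ => mul_le_one₀ (e1 ..) (e0 ..) (e1 ..))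
    simp_rw [h1]
    rw [integral_integral_swap]
    · rw [← integral_finsetSum _ (fun k _ => ggi k)]
      congr 1; funext ω
      rw [integral_const_mul, integral_finsetSum]
      · have : ∀ i : Fin N, ∫ θs, (1 - ∑ k, e k (θs 0) ω * e k (θs i.succ) ω) ∂P
            = ∑ k, g k ω * (1 - g k ω) := by
          intro i
          rw [integral_sub (integrable_const _) (integrable_finsetSum _ fun k _ => ei2 ω k i),
            integral_finsetSum _ fun k _ => ei2 ω k i]
          have : ∀ k, ∫ θs, e k (θs 0) ω * e k (θs i.succ) ω ∂P = g k ω * g k ω := by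
            intro k
            rw [hP, aux_pair μ (N+1) 0 i.succ (Fin.succ_ne_zero i).symm (fun θ => e k θ ω)
              (em1 k ω), ge]
          simp only [this, mul_sub, mul_one, Finset.sum_sub_distrib, gsum]
          simp
        simp only [this]
        simp [hN0]
      · intro i _
        exact (integrable_const _).sub (integrable_finsetSum _ fun k _ => ei2 ω k i)
    · refine Integrable.const_mul (μ := P.prod ν) (f := fun p => ∑ i : Fin N, (1 - ∑ k, e k (p.1 0) p.2 * e k (p.1 i.succ) p.2)) ?_ _
      refine integrable_finsetSum _ fun i _ => (integrable_const _).sub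
        (integrable_finsetSum _ fun k _ => ?_)
      exact aux_int _ _ ((em2 k 0).mul (em2 k i.succ))
        (fun _ => mul_nonneg (e0 ..) (e0 ..)) (fun _ => mul_le_one₀ (e1 ..) (e0 ..) (e1 ..))
  rw [herr, hpdd, Finset.mul_sum]
  refine Finset.sum_le_sum fun k _ => ?_
  by_cases hk : k = k'
  · subst hk
    rw [aux_calib ν (y k) (g k) (ym k) (gm k) (y0 k) (y1 k) (g0 k) (g1 k) a calib_over]
    exact mul_le_mul_of_nonneg_right (by linarith) (gg0 k)
  · rw [aux_calib ν (y k) (g k) (ym k) (gm k) (y0 k) (y1 k) (g0 k) (g1 k) b (calib_rest k hk)]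
end
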